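/- Let I be a monomial ideal of R = K[x_1,…,x_n] of height at least 2. Then R/I is Gorenstein if and only if R/sgn(I) is Gorenstein. -/

import Mathlib

open MvPolynomial

/-- The monomial ideal of `R = K[x_1,…,x_n]` generated by the monomials `x^{v j}`,
`j = 1, …, q`, with exponent vectors `v j ∈ ℕ^n`. -/
noncomputable def monIdeal (K : Type) [Field K] {n q : ℕ} (v : Fin q → Fin n →₀ ℕ) :
    Ideal (MvPolynomial (Fin n) K) :=
  Ideal.span (Set.range fun j => monomial (v j) (1 : K))

/-- The exponent vectors `v j` are pairwise non-comparable in the componentwise order,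
i.e. the corresponding monomials form an anti-chain under divisibility.  Equivalently,
`{x^{v j}}` is the (unique) minimal monomial generating set `G(I)` of the monomial ideal
`I` it generates. -/
def AntichainFam {n q : ℕ} (v : Fin q → Fin n →₀ ℕ) : Prop :=
  ∀ j k : Fin q, v j ≤ v k → j = k

/-- The signature of the family `v` of exponent vectors (the columns of the incidence
matrix `A`): for each row `i`, the `(i,j)` entry of the signature matrix is the position
of `A i j = v j i` in the ascending list of the distinct entries of the `i`-th row of `A`,
i.e. the number of distinct values in row `i` that are strictly smaller than `v j i`.
The columns of the resulting matrix are the exponent vectors of the generators of the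
signature ideal `sgn(I) = monIdeal K (sgnExp v)`. -/
noncomputable def sgnExp {n q : ℕ} (v : Fin q → Fin n →₀ ℕ) : Fin q → Fin n →₀ ℕ :=
  fun j => Finsupp.equivFunOnFinite.symm fun i =>
    ((Finset.univ.image fun k : Fin q => v k i).filter fun m => m < v j i).card

/-- The graded maximal ideal `(x_1, …, x_n)` of `K[x_1,…,x_n]`. -/
noncomputable def mIdeal (K : Type) [Field K] (n : ℕ) : Ideal (MvPolynomial (Fin n) K) :=
  Ideal.span (Set.range (X : Fin n → MvPolynomial (Fin n) K))

/-- The depth of `R/I` with respect to the maximal ideal `(x_1, …, x_n)`: the largest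
length of an `R/I`-regular sequence consisting of elements of `(x_1, …, x_n)`. -/
noncomputable def depthQuot (K : Type) [Field K] (n : ℕ)
    (I : Ideal (MvPolynomial (Fin n) K)) : ℕ :=
  sSup { k : ℕ | ∃ rs : List (MvPolynomial (Fin n) K), rs.length = k ∧
    (∀ r ∈ rs, r ∈ mIdeal K n) ∧
    RingTheory.Sequence.IsRegular (MvPolynomial (Fin n) K ⧸ I) rs }

/-- The height (codimension) of an ideal: the infimum of the heights of the prime ideals
containing it, where the height of a prime is the supremum of the lengths of chains of
primes descending from it. -/
noncomputable def heightOf {R : Type*} [CommRing R] (I : Ideal R) : ℕ∞ :=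
  ⨅ p ∈ { p : PrimeSpectrum R | I ≤ p.asIdeal }, Order.height p

/-- `R/I` is Cohen–Macaulay: its depth equals its Krull dimension. -/
noncomputable def cmQuot (K : Type) [Field K] (n : ℕ)
    (I : Ideal (MvPolynomial (Fin n) K)) : Prop :=
  ((depthQuot K n I : ℕ∞) : WithBot ℕ∞) = ringKrullDim (MvPolynomial (Fin n) K ⧸ I)

/-- Basis (index) type of the `k`-th free module `F_k = ⊕_j R(-j)^{b k j}` of a graded
free resolution: a basis element is a pair `(j, t)` where `j` is its degree shift. -/
def resBas (b : ℕ → ℕ → ℕ) (k : ℕ) : Type := Σ j : ℕ, Fin (b k j)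

/-- The `R`-linear map `(α →₀ R) → (β →₀ R)` determined by the matrix whose row at the
basis element `e : α` is `D e`. -/
noncomputable def resMap {R : Type*} [CommRing R] {α β : Type*}
    (D : α → (β →₀ R)) : (α →₀ R) →ₗ[R] (β →₀ R) :=
  Finsupp.linearCombination R D

/-- A minimal graded free resolution `0 → F_g → ⋯ → F_1 → F_0 = R → R/I → 0` of `R/I`
over the standard graded polynomial ring `R = K[x_1,…,x_n]`, where
`F_k = ⊕_j R(-j)^{b k j}`.  The differentials are graded of degree `0`: the matrix entry
from a basis element with shift `j` to one with shift `j'` is homogeneous of degree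
`j - j'`; minimality holds since all (nonzero) entries have `j' < j`, hence positive
degree, i.e. lie in the graded maximal ideal. -/
structure MinFreeRes (K : Type) [Field K] (n : ℕ)
    (I : Ideal (MvPolynomial (Fin n) K)) where
  /-- the length `g` of the resolution -/
  len : ℕ
  /-- the graded Betti numbers: `F_k = ⊕_j R(-j)^{b k j}` -/
  b : ℕ → ℕ → ℕ
  /-- `F_0 = R` (one copy, no shift) -/
  hb0 : ∀ j, b 0 j = if j = 0 then 1 else 0
  /-- the resolution stops at homological degree `len` -/
  htop : ∀ k, len < k → ∀ j, b k j = 0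
  /-- there are only finitely many nonzero Betti numbers -/
  hfin : (Function.support fun kj : ℕ × ℕ => b kj.1 kj.2).Finite
  /-- the matrices of the differentials `d_{k+1} : F_{k+1} → F_k` -/
  D : ∀ k : ℕ, resBas b (k + 1) → (resBas b k →₀ MvPolynomial (Fin n) K)
  /-- gradedness and minimality of the differentials -/
  hhom : ∀ k e e', D k e e' = 0 ∨
    (e'.1 < e.1 ∧ (D k e e').IsHomogeneous (e.1 - e'.1))
  /-- exactness at `F_k` for `k ≥ 1`; taking `k = len` this also forces injectivity of
  the last differential, since `F_k = 0` for `k > len` -/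
  hexact : ∀ k, LinearMap.range (resMap (D (k + 1))) = LinearMap.ker (resMap (D k))
  /-- exactness at `F_0`, the augmentation `F_0 = R → R/I` being the quotient map -/
  hexact0 : LinearMap.range (resMap (D 0)) =
    LinearMap.ker (Finsupp.linearCombination (MvPolynomial (Fin n) K)
      (fun _ : resBas b 0 => (1 : MvPolynomial (Fin n) K ⧸ I)))

/-- The Castelnuovo–Mumford regularity of `R/I`, computed from a minimal graded free
resolution: `reg(R/I) = max { j - k : b k j ≠ 0 }`. -/
noncomputable def MinFreeRes.reg {K : Type} [Field K] {n : ℕ}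
    {I : Ideal (MvPolynomial (Fin n) K)} (F : MinFreeRes K n I) : ℤ :=
  sSup { d : ℤ | ∃ k j : ℕ, F.b k j ≠ 0 ∧ d = (j : ℤ) - (k : ℤ) }

/-- `R/I` is Gorenstein: it is Cohen–Macaulay and in the minimal graded free resolution
`0 → F_g → ⋯ → F_0 → R/I → 0` the last free module `F_g` has rank `1`, i.e. there is a
unique shift `j₀` with `b_{g,j₀} ≠ 0` and `b_{g,j₀} = 1`. -/
noncomputable def gorQuot (K : Type) [Field K] (n : ℕ)
    (I : Ideal (MvPolynomial (Fin n) K)) : Prop :=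
  cmQuot K n I ∧ ∃ F : MinFreeRes K n I, ∃ j₀ : ℕ, F.b F.len j₀ = 1 ∧
    ∀ j, F.b F.len j ≠ 0 → j = j₀

/-!
The `ℕⁿ`-graded minimal free resolution of a monomial quotient is encoded by the degrees of its
basis elements and by matrices of scalars, exactness being a condition on vector spaces in each
degree separately. This condition only depends on which basis elements have degree at most the given
one. Hence, replacing the degrees by their images under a strictly increasing map with an upper
adjoint gives the minimal resolution of the ideal with the relabelled generators, with the same
ranks. If `ht I ≥ 2`, then no variable divides all generators, every row of the incidence matrix
contains a `0`, and both `I` and `sgn I` are obtained by relabelling a product of finite chains with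
bottom, the entries of the rows.

The ranks determine whether the quotient is Gorenstein: they do not depend on the minimal
resolution, being the lengths of `Ext k (R/I) (R/m)`; by the Auslander–Buchsbaum formula they
determine the depth; and the dimension depends only on the supports of the generators, which are the
same for `I` and `sgn I`.
-/

universe w v u

/-! ### Minimal free resolutions and `Ext` -/

section MinimalCovers

open CategoryTheory Abelian

variable {R : Type u} [CommRing R] {m : Ideal R} {A : Type u} {M : Type u} [AddCommGroup M]
  [Module R M]

/-- A minimal free cover: a surjection from a free module whose kernel is contained in `m` times
the free module, i.e. all coordinates of every relation lie in `m`. -/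
structure IsMinimalCover (m : Ideal R) (f : (A →₀ R) →ₗ[R] M) : Prop where
  surjective : Function.Surjective f
  mem_of_mem_ker : ∀ z ∈ LinearMap.ker f, ∀ e, z e ∈ m

theorem linearMap_quotient_apply_eq_zero (φ : (A →₀ R) →ₗ[R] R ⧸ m) {z : A →₀ R}
    (hz : ∀ e, z e ∈ m) : φ z = 0 := by
  rw [← z.sum_single, Finsupp.sum, map_sum]
  refine Finset.sum_eq_zero fun e _ => ?_
  rw [← Finsupp.smul_single_one, map_smul, Algebra.smul_def, Ideal.Quotient.algebraMap_eq,
    Ideal.Quotient.eq_zero_iff_mem.2 (hz e), zero_mul]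

namespace IsMinimalCover

variable {f : (A →₀ R) →ₗ[R] M}

theorem length_hom [Fintype A] [m.IsMaximal] (hf : IsMinimalCover m f) :
    Module.length R (M →ₗ[R] R ⧸ m) = Fintype.card A := by
  have hinj : Function.Injective (LinearMap.lcomp R (R ⧸ m) f) := fun φ ψ h =>
    LinearMap.cancel_right hf.surjective |>.1 h
  have hsurj : Function.Surjective (LinearMap.lcomp R (R ⧸ m) f) := fun φ => by
    have hker : LinearMap.ker f ≤ LinearMap.ker φ := fun z hz =>
      linearMap_quotient_apply_eq_zero φ (hf.mem_of_mem_ker z hz)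
    refine ⟨(LinearMap.ker f).liftQ φ hker ∘ₗ
      (f.quotKerEquivOfSurjective hf.surjective).symm.toLinearMap, LinearMap.ext fun z => ?_⟩
    have : (f.quotKerEquivOfSurjective hf.surjective).symm (f z) = Submodule.Quotient.mk z :=
      (LinearEquiv.symm_apply_eq _).2 rfl
    simp [this]
  have : IsSimpleModule R (R ⧸ m) := isSimpleModule_iff_isCoatom.2 (Ideal.isMaximal_def.1 ‹_›)
  rw [(LinearEquiv.ofBijective _ ⟨hinj, hsurj⟩).length_eq,
    ← (Finsupp.llift (R ⧸ m) R R A).length_eq, Module.length_pi_of_fintype]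
  simp [Module.length_eq_one]

theorem length_ext_ker (hf : IsMinimalCover m f) (k : ℕ) :
    Module.length R (Ext (ModuleCat.of R (LinearMap.ker f)) (ModuleCat.of R (R ⧸ m)) k) =
      Module.length R (Ext (ModuleCat.of R M) (ModuleCat.of R (R ⧸ m)) (k + 1)) := by
  have hS := LinearMap.shortExact_shortComplexKer hf.surjective
  have : Projective f.shortComplexKer.X₂ := inferInstanceAs (Projective (ModuleCat.of R (A →₀ R)))
  let δ := hS.extClass.precompOfLinear R (ModuleCat.of R (R ⧸ m)) (add_comm 1 k)
  refine (LinearEquiv.ofBijective δ ⟨(injective_iff_map_eq_zero δ).2 fun x hx => ?_,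
    precomp_extClass_surjective_of_projective_X₂ _ hS k⟩).length_eq
  obtain ⟨y, rfl⟩ := Ext.contravariant_sequence_exact₁ hS _ x (add_comm 1 k) hx
  cases k with
  | zero =>
    obtain ⟨φ, rfl⟩ := Ext.homEquiv₀.symm.surjective y
    change (Ext.mk₀ _).comp (Ext.mk₀ φ) _ = 0
    have hφ : f.shortComplexKer.f ≫ φ = 0 := ModuleCat.hom_ext <| LinearMap.ext fun z =>
      linearMap_quotient_apply_eq_zero φ.hom (hf.mem_of_mem_ker z.1 z.2)
    rw [Ext.mk₀_comp_mk₀, hφ, Ext.mk₀_zero]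
  | succ k => rw [Ext.eq_zero_of_projective y, Ext.comp_zero]

end IsMinimalCover

end MinimalCovers

section MinimalResolutions

open CategoryTheory Abelian

variable {R : Type u} [CommRing R] {m : Ideal R} {M : Type u} [AddCommGroup M] [Module R M]

/-- A minimal resolution `⋯ → F₁ → F₀ → M → 0` by finite free modules `F k = R^(Idx k)`; minimality
with respect to the ideal `m` says that the entries of the differentials lie in `m`. -/
structure MinimalFreeResolution {R : Type u} [CommRing R] (m : Ideal R) (M : Type u)
    [AddCommGroup M] [Module R M] where
  Idx : ℕ → Type u
  [fintype : ∀ k, Fintype (Idx k)]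
  aug : (Idx 0 →₀ R) →ₗ[R] M
  d : ∀ k, (Idx (k + 1) →₀ R) →ₗ[R] (Idx k →₀ R)
  aug_surjective : Function.Surjective aug
  exact_aug : Function.Exact (d 0) aug
  exact : ∀ k, Function.Exact (d (k + 1)) (d k)
  d_mem : ∀ k x e, d k x e ∈ m

namespace MinimalFreeResolution

attribute [instance] fintype

theorem isMinimalCover_aug (F : MinimalFreeResolution m M) : IsMinimalCover m F.aug where
  surjective := F.aug_surjective
  mem_of_mem_ker z hz e := by
    obtain ⟨x, rfl⟩ := (F.exact_aug z).1 hz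
    exact F.d_mem 0 x e

/-- The truncated resolution `⋯ → F₂ → F₁ → ker (F₀ → M) → 0` of the first syzygy module. -/
noncomputable def tail (F : MinimalFreeResolution m M) :
    MinimalFreeResolution m (LinearMap.ker F.aug) where
  Idx k := F.Idx (k + 1)
  aug := (F.d 0).codRestrict _ F.exact_aug.apply_apply_eq_zero
  d k := F.d (k + 1)
  aug_surjective z := by
    obtain ⟨x, hx⟩ := (F.exact_aug z).1 z.2
    exact ⟨x, Subtype.ext hx⟩
  exact_aug z := Subtype.ext_iff.trans (F.exact 0 z)
  exact k := F.exact (k + 1)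
  d_mem k := F.d_mem (k + 1)

theorem card_idx_eq_length_ext [m.IsMaximal] (F : MinimalFreeResolution m M) (k : ℕ) :
    Fintype.card (F.Idx k) =
      Module.length R (Ext (ModuleCat.of R M) (ModuleCat.of R (R ⧸ m)) k) := by
  induction k generalizing M with
  | zero =>
    rw [(Ext.linearEquiv₀ (R := R)).length_eq, (ModuleCat.homLinearEquiv (S := R)).length_eq,
      F.isMinimalCover_aug.length_hom]
  | succ k ih => rw [← F.isMinimalCover_aug.length_ext_ker, ← ih F.tail]; rfl

theorem card_idx_eq [m.IsMaximal] (F G : MinimalFreeResolution m M) (k : ℕ) :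
    Fintype.card (F.Idx k) = Fintype.card (G.Idx k) := by
  rw [← ENat.natCast_inj, F.card_idx_eq_length_ext, G.card_idx_eq_length_ext]

end MinimalFreeResolution

end MinimalResolutions

/-! ### Grade and the Auslander–Buchsbaum formula -/

section Grade

open CategoryTheory Abelian

section Abelian

variable {C : Type u} [Category.{v} C] [Abelian C] [HasExt.{w} C]

/-- `Y` has grade `d` with respect to `X`: the first nonvanishing group `Ext X Y i` is the one in
degree `i = d`. -/
structure HasGrade (X Y : C) (d : ℕ) : Prop where
  subsingleton_of_lt : ∀ i < d, Subsingleton (Ext X Y i)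
  nontrivial : Nontrivial (Ext X Y d)

variable {X Y : C} {d : ℕ}

theorem HasGrade.of_iso {Y' : C} (h : HasGrade X Y d) (e : Y ≅ Y') : HasGrade X Y' d := by
  have extEquiv (i : ℕ) : Ext X Y i ≃ Ext X Y' i :=
    ((extFunctorObj X i).mapIso e).addCommGroupIsoToAddEquiv.toEquiv
  refine ⟨fun i hi => ?_, ?_⟩
  · have := h.subsingleton_of_lt i hi
    exact (extEquiv i).symm.subsingleton
  · have := h.nontrivial
    exact (extEquiv d).symm.nontrivial

theorem HasGrade.X₃_of_shortExact {S : ShortComplex C} (hS : S.ShortExact)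
    (h₁ : HasGrade X S.X₁ d) (h₂ : ∀ i < d, Subsingleton (Ext X S.X₂ i))
    (hzero : ∀ x : Ext X S.X₁ d, x.comp (Ext.mk₀ S.f) (add_zero d) = 0) :
    ∃ d', d = d' + 1 ∧ HasGrade X S.X₃ d' := by
  have := h₁.nontrivial
  obtain ⟨x, hx⟩ := exists_ne (0 : Ext X S.X₁ d)
  cases d with
  | zero =>
    have := hS.mono_f
    exact absurd (Ext.postcomp_mk₀_injective_of_mono X S.f
      (by simpa using hzero x)) hx
  | succ d =>
    refine ⟨d, rfl, fun i hi => subsingleton_of_forall_eq 0 fun z => ?_, ?_⟩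
    · have := h₁.subsingleton_of_lt (i + 1) (by omega)
      have := h₂ i (by omega)
      obtain ⟨t, rfl⟩ := Ext.covariant_sequence_exact₃ X hS z rfl (Subsingleton.elim _ _)
      rw [Subsingleton.elim t 0, Ext.zero_comp]
    · obtain ⟨y, rfl⟩ := Ext.covariant_sequence_exact₁ X hS x (hzero x) rfl
      exact ⟨y, 0, fun hy => hx (by rw [hy, Ext.zero_comp])⟩

end Abelian

variable {R : Type u} [CommRing R] {m : Ideal R}

theorem ext_quotient_smul_eq_zero {r : R} (hr : r ∈ m) {M : ModuleCat.{u} R} {i : ℕ}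
    (x : Ext (ModuleCat.of R (R ⧸ m)) M i) : r • x = 0 := by
  have hid : r • 𝟙 (ModuleCat.of R (R ⧸ m)) = 0 := ModuleCat.hom_ext <| LinearMap.ext fun y => by
    change r • y = 0
    rw [Algebra.smul_def, Ideal.Quotient.algebraMap_eq, Ideal.Quotient.eq_zero_iff_mem.2 hr,
      zero_mul]
  rw [← Ext.mk₀_id_comp x, ← Ext.smul_comp, ← Ext.mk₀_smul, hid, Ext.mk₀_zero, Ext.zero_comp]

section Finsupp

variable {A B : Type u} [Finite A] {X : ModuleCat.{u} R} {i : ℕ}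

theorem ext_finsupp_eq_zero (x : Ext X (ModuleCat.of R (A →₀ R)) i)
    (h : ∀ e : A, x.comp (Ext.mk₀ (ModuleCat.ofHom (Finsupp.lapply e))) (add_zero i) = 0) :
    x = 0 := by
  have := Fintype.ofFinite A
  have hid : 𝟙 (ModuleCat.of R (A →₀ R)) = ∑ e : A,
      ModuleCat.ofHom (Finsupp.lapply e) ≫ ModuleCat.ofHom (Finsupp.lsingle (R := R) e) := by
    refine ModuleCat.hom_ext <| LinearMap.ext fun z => ?_
    simp [ModuleCat.hom_sum, LinearMap.sum_apply]
  rw [← Ext.comp_mk₀_id x, hid, Ext.mk₀_sum, Ext.comp_sum]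
  refine Finset.sum_eq_zero fun e _ => ?_
  rw [← Ext.mk₀_comp_mk₀, ← Ext.comp_assoc_of_second_deg_zero, h, Ext.zero_comp]

theorem ext_comp_eq_zero_of_forall_mem [Finite B] (φ : (B →₀ R) →ₗ[R] (A →₀ R))
    (hφ : ∀ z e, φ z e ∈ m) (x : Ext (ModuleCat.of R (R ⧸ m)) (ModuleCat.of R (B →₀ R)) i) :
    x.comp (Ext.mk₀ (ModuleCat.ofHom φ)) (add_zero i) = 0 := by
  have := Fintype.ofFinite B
  refine ext_finsupp_eq_zero _ fun e => ?_
  have hrow : ModuleCat.ofHom φ ≫ ModuleCat.ofHom (Finsupp.lapply e) =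
      ∑ b : B, φ (Finsupp.single b 1) e • ModuleCat.ofHom (Finsupp.lapply (R := R) b) := by
    refine ModuleCat.hom_ext <| Finsupp.lhom_ext' fun b => LinearMap.ext_ring ?_
    classical simp [ModuleCat.hom_sum, Finsupp.single_apply]
  rw [Ext.comp_assoc_of_second_deg_zero, Ext.mk₀_comp_mk₀, hrow, Ext.mk₀_sum, Ext.comp_sum]
  refine Finset.sum_eq_zero fun b _ => ?_
  rw [Ext.mk₀_smul, Ext.comp_smul, ext_quotient_smul_eq_zero (hφ _ e)]

theorem HasGrade.finsupp [Nonempty A] {n : ℕ} (h : HasGrade X (ModuleCat.of R R) n) :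
    HasGrade X (ModuleCat.of R (A →₀ R)) n where
  subsingleton_of_lt i hi := subsingleton_of_forall_eq 0 fun x =>
    have := h.subsingleton_of_lt i hi
    ext_finsupp_eq_zero x fun e => Subsingleton.elim _ _
  nontrivial := by
    have := h.nontrivial
    obtain ⟨x, hx⟩ := exists_ne (0 : Ext X (ModuleCat.of R R) n)
    have e := Classical.arbitrary A
    have hid : ModuleCat.ofHom (Finsupp.lsingle (R := R) (M := R) e) ≫
        ModuleCat.ofHom (Finsupp.lapply e) = 𝟙 (ModuleCat.of R R) := by
      ext; simp
    refine ⟨x.comp (Ext.mk₀ (ModuleCat.ofHom (Finsupp.lsingle e))) (add_zero n), 0, fun h0 => hx ?_⟩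
    rw [← Ext.comp_mk₀_id x, ← hid, ← Ext.mk₀_comp_mk₀, ← Ext.comp_assoc_of_second_deg_zero, h0,
      Ext.zero_comp]

end Finsupp

namespace MinimalFreeResolution

variable {M : Type u} [AddCommGroup M] [Module R M]

-- The vanishing clause is the induction hypothesis needed for the connecting map: it says that the
-- inclusion of a syzygy module kills the first nonvanishing `Ext`.
theorem hasGrade_and_ext_comp_eq_zero {n g : ℕ}
    (hR : HasGrade (ModuleCat.of R (R ⧸ m)) (ModuleCat.of R R) n) (F : MinimalFreeResolution m M)
    [Nonempty (F.Idx g)] [IsEmpty (F.Idx (g + 1))] :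
    ∃ d, d + g = n ∧ HasGrade (ModuleCat.of R (R ⧸ m)) (ModuleCat.of R M) d ∧
      ∀ (A : Type u) [Finite A] (ι : M →ₗ[R] A →₀ R), (∀ y e, ι y e ∈ m) →
        ∀ x : Ext (ModuleCat.of R (R ⧸ m)) (ModuleCat.of R M) d,
          x.comp (Ext.mk₀ (ModuleCat.ofHom ι)) (add_zero d) = 0 := by
  induction g generalizing M with
  | zero =>
    have hinj : Function.Injective F.aug := (injective_iff_map_eq_zero F.aug).2 fun z hz => by
      obtain ⟨x, rfl⟩ := (F.exact_aug z).1 hz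
      rw [Subsingleton.elim x 0, map_zero]
    let e : ModuleCat.of R (F.Idx 0 →₀ R) ≅ ModuleCat.of R M :=
      (LinearEquiv.ofBijective F.aug ⟨hinj, F.aug_surjective⟩).toModuleIso
    refine ⟨n, rfl, hR.finsupp.of_iso e, fun A _ ι hι x => ?_⟩
    have := ext_comp_eq_zero_of_forall_mem (ι ∘ₗ F.aug) (fun z => hι (F.aug z))
      (x.comp (Ext.mk₀ e.inv) (add_zero n))
    rwa [Ext.comp_assoc_of_second_deg_zero, Ext.mk₀_comp_mk₀, show ModuleCat.ofHom (ι ∘ₗ F.aug) =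
      e.hom ≫ ModuleCat.ofHom ι from rfl, e.inv_hom_id_assoc] at this
  | succ g ih =>
    have : Nonempty (F.tail.Idx g) := ‹_›
    have : IsEmpty (F.tail.Idx (g + 1)) := ‹_›
    obtain ⟨d, hd, hgrade, hzero⟩ := ih F.tail
    obtain ⟨d', rfl, hgrade'⟩ := hgrade.X₃_of_shortExact
      (LinearMap.shortExact_shortComplexKer F.aug_surjective)
      (fun i hi => subsingleton_of_forall_eq 0 fun x =>
        have := hR.subsingleton_of_lt i (by omega)
        ext_finsupp_eq_zero x fun e => Subsingleton.elim _ _)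
      (hzero _ _ fun z => F.isMinimalCover_aug.mem_of_mem_ker z.1 z.2)
    refine ⟨d', by omega, hgrade', fun A _ ι _ x => ext_finsupp_eq_zero _ fun e => ?_⟩
    have := hR.subsingleton_of_lt d' (by omega)
    exact Subsingleton.elim _ _

theorem exists_add_eq_and_hasGrade {n g : ℕ}
    (hR : HasGrade (ModuleCat.of R (R ⧸ m)) (ModuleCat.of R R) n) (F : MinimalFreeResolution m M)
    [Nonempty (F.Idx g)] [IsEmpty (F.Idx (g + 1))] :
    ∃ d, d + g = n ∧ HasGrade (ModuleCat.of R (R ⧸ m)) (ModuleCat.of R M) d :=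
  let ⟨d, hd, hgrade, _⟩ := F.hasGrade_and_ext_comp_eq_zero hR
  ⟨d, hd, hgrade⟩

end MinimalFreeResolution

end Grade

section RegularSequences

open CategoryTheory Abelian RingTheory.Sequence

variable {R : Type u} [CommRing R] {m : Ideal R}

theorem smul_top_quotient_lt_top {I : Ideal R} (hm : m ≠ ⊤) (hI : I ≤ m) :
    m • (⊤ : Submodule R (R ⧸ I)) < ⊤ := by
  refine lt_top_iff_ne_top.2 fun htop => hm ?_
  rw [Ideal.smul_top_eq_map, Submodule.restrictScalars_eq_top_iff,
    Ideal.Quotient.algebraMap_eq] at htop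
  rw [← sup_eq_right.2 hI, ← Ideal.comap_map_quotientMk, htop, Ideal.comap_top]

theorem length_le_supportDim {M : Type u} [AddCommGroup M] [Module R M] [Module.Finite R M]
    {rs : List R} (h : IsRegular M rs) : (rs.length : WithBot ℕ∞) ≤ Module.supportDim R M := by
  induction rs generalizing M with
  | nil =>
    have := h.nontrivial
    exact Order.krullDim_nonneg_iff.2 Module.nonempty_support_of_nontrivial.to_subtype
  | cons a rs ih =>
    rw [isRegular_cons_iff] at h
    refine le_trans ?_ (Module.supportDim_quotSMulTop_succ_le_of_notMem_minimalPrimes (x := a)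
      fun _ => h.1.notMem_of_mem_minimalPrimes)
    rw [List.length_cons, Nat.cast_succ]
    exact add_le_add_left (ih h.2) 1

variable [IsNoetherianRing R]

theorem exists_isRegular_iff_forall_subsingleton_ext (M : ModuleCat.{u} R) [Module.Finite R M]
    (hM : m • (⊤ : Submodule R M) < ⊤) (k : ℕ) :
    (∃ rs : List R, rs.length = k ∧ (∀ r ∈ rs, r ∈ m) ∧ IsRegular M rs) ↔
      ∀ i < k, Subsingleton (Ext (ModuleCat.of R (R ⧸ m)) M i) := by
  have hsupp : Module.support R (ModuleCat.of R (R ⧸ m)) = PrimeSpectrum.zeroLocus m := by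
    rw [Module.support_eq_zeroLocus, Ideal.annihilator_quotient]
  constructor
  · rintro ⟨rs, rfl, hmem, hreg⟩
    exact ModuleCat.subsingleton_ext_of_exists_isRegular m _ hsupp.le M hM rs hmem hreg
  · exact ModuleCat.exists_isRegular_of_exists_subsingleton_ext m k M hM _ hsupp

theorem hasGrade_iff_isGreatest (M : ModuleCat.{u} R) [Module.Finite R M]
    (hM : m • (⊤ : Submodule R M) < ⊤) (d : ℕ) :
    HasGrade (ModuleCat.of R (R ⧸ m)) M d ↔ IsGreatest
      {k | ∃ rs : List R, rs.length = k ∧ (∀ r ∈ rs, r ∈ m) ∧ IsRegular M rs} d := by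
  simp only [exists_isRegular_iff_forall_subsingleton_ext M hM]
  refine ⟨fun h => ⟨h.subsingleton_of_lt, fun k hk => ?_⟩, fun h => ⟨h.1, ?_⟩⟩
  · by_contra! hlt
    exact not_subsingleton_iff_nontrivial.2 h.nontrivial (hk d hlt)
  · by_contra htriv
    have hsucc : d + 1 ≤ d := h.2 fun i hi => (Nat.lt_succ_iff_lt_or_eq.1 hi).elim (h.1 i)
      fun hid => hid ▸ not_nontrivial_iff_subsingleton.1 htriv
    omega

end RegularSequences

section PolynomialRing

open RingTheory.Sequence

variable {K : Type} [Field K] {n : ℕ}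

theorem mem_mIdeal_iff {p : MvPolynomial (Fin n) K} : p ∈ mIdeal K n ↔ constantCoeff p = 0 := by
  change p ∈ idealOfVars (Fin n) K ↔ _
  rw [← pow_one (idealOfVars (Fin n) K), mem_pow_idealOfVars_iff']
  simp [constantCoeff_eq, Finsupp.degree_eq_zero_iff]

instance mIdeal_isMaximal : (mIdeal K n).IsMaximal := by
  have hker : mIdeal K n = RingHom.ker (constantCoeff : MvPolynomial (Fin n) K →+* K) := by
    ext p
    rw [mem_mIdeal_iff, RingHom.mem_ker]
  rw [hker]
  exact RingHom.ker_isMaximal_of_surjective _ fun a => ⟨C a, constantCoeff_C _ a⟩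

theorem ofList_take_ofFn_X (i : ℕ) :
    Ideal.ofList ((List.ofFn (X : Fin n → MvPolynomial (Fin n) K)).take i) =
      Ideal.span (X '' {j : Fin n | (j : ℕ) < i}) := by
  rw [Ideal.ofList]
  congr 1
  ext p
  simp only [Set.mem_ofPred_eq, Set.mem_image, List.mem_take_iff_getElem, List.getElem_ofFn,
    List.length_ofFn]
  constructor
  · rintro ⟨j, hj, rfl⟩
    exact ⟨⟨j, by omega⟩, by simp only; omega, rfl⟩
  · rintro ⟨j, hj, rfl⟩
    exact ⟨j, by omega, rfl⟩

theorem isWeaklyRegular_ofFn_X :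
    IsWeaklyRegular (MvPolynomial (Fin n) K) (List.ofFn (X : Fin n → MvPolynomial (Fin n) K)) := by
  refine (isWeaklyRegular_iff _ _).2 fun i hi => ?_
  rw [isSMulRegular_quotient_iff_mem_of_smul_mem]
  intro p hp
  rw [List.length_ofFn] at hi
  rw [smul_eq_mul, Ideal.mul_top, ofList_take_ofFn_X, mem_ideal_span_X_image] at hp ⊢
  intro a ha
  obtain ⟨j, hj, hj'⟩ := hp (Finsupp.single ⟨i, hi⟩ 1 + a) (by
    rw [List.getElem_ofFn, smul_eq_mul, mem_support_iff, coeff_X_mul]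
    exact mem_support_iff.1 ha)
  have hne : (⟨i, hi⟩ : Fin n) ≠ j := by
    rintro rfl
    exact lt_irrefl i hj
  exact ⟨j, hj, by simpa [Finsupp.single_apply, hne] using hj'⟩

theorem hasGrade_mvPolynomial :
    HasGrade (ModuleCat.of (MvPolynomial (Fin n) K) (MvPolynomial (Fin n) K ⧸ mIdeal K n))
      (ModuleCat.of (MvPolynomial (Fin n) K) (MvPolynomial (Fin n) K)) n := by
  have hlt : mIdeal K n • (⊤ : Ideal (MvPolynomial (Fin n) K)) < ⊤ := by
    rw [smul_eq_mul, Ideal.mul_top]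
    exact lt_top_iff_ne_top.2 Ideal.IsPrime.ne_top'
  have hmem : ∀ r ∈ List.ofFn (X : Fin n → MvPolynomial (Fin n) K), r ∈ mIdeal K n := fun r hr =>
    Ideal.subset_span ((List.mem_ofFn' _ _).1 hr)
  refine (hasGrade_iff_isGreatest (ModuleCat.of _ (MvPolynomial (Fin n) K)) hlt n).2
    ⟨⟨List.ofFn X, List.length_ofFn, hmem, isWeaklyRegular_ofFn_X, fun htop => ?_⟩, ?_⟩
  · exact hlt.not_ge (htop.le.trans (Submodule.smul_mono_left (Ideal.span_le.2 hmem)))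
  · rintro k ⟨rs, rfl, -, hreg⟩
    have hdim := length_le_supportDim hreg
    rw [Module.supportDim_self_eq_ringKrullDim, MvPolynomial.ringKrullDim_of_isNoetherianRing,
      ringKrullDim_eq_zero_of_field, zero_add, Nat.card_eq_fintype_card, Fintype.card_fin] at hdim
    exact_mod_cast hdim

theorem HasGrade.depthQuot_eq {I : Ideal (MvPolynomial (Fin n) K)} (hI : I ≤ mIdeal K n) {d : ℕ}
    (h : HasGrade (ModuleCat.of (MvPolynomial (Fin n) K) (MvPolynomial (Fin n) K ⧸ mIdeal K n))
      (ModuleCat.of (MvPolynomial (Fin n) K) (MvPolynomial (Fin n) K ⧸ I)) d) :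
    depthQuot K n I = d :=
  ((hasGrade_iff_isGreatest (ModuleCat.of _ (MvPolynomial (Fin n) K ⧸ I))
    (smul_top_quotient_lt_top Ideal.IsPrime.ne_top' hI) d).1 h).csSup_eq

end PolynomialRing

/-! ### Betti numbers and the Gorenstein property -/

theorem linearCombination_one_eq_mk {R ι : Type*} [CommRing R] [Unique ι] (I : Ideal R)
    (z : ι →₀ R) :
    Finsupp.linearCombination R (fun _ => (1 : R ⧸ I)) z = Ideal.Quotient.mk I (z default) :=
  (Finsupp.linearCombination_unique _ _ _).trans (congrArg (Ideal.Quotient.mk I) (mul_one _))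

namespace MinFreeRes

variable {K : Type} [Field K] {n : ℕ} {I J : Ideal (MvPolynomial (Fin n) K)}

theorem finite_resBas (F : MinFreeRes K n I) (k : ℕ) : Finite (resBas F.b k) := by
  have hsupp : {j | F.b k j ≠ 0}.Finite :=
    F.hfin.preimage (f := Prod.mk k) (Prod.mk_right_injective k).injOn
  refine Set.finite_univ_iff.1 (Set.Finite.of_finite_fibers Sigma.fst (hsupp.subset ?_) ?_)
  · rintro _ ⟨⟨j, t⟩, -, rfl⟩
    exact t.pos.ne'
  · rintro j -
    refine (Set.finite_range (Sigma.mk j)).subset ?_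
    rintro ⟨_, t⟩ ⟨-, rfl⟩
    exact ⟨t, rfl⟩

instance uniqueResBasZero (F : MinFreeRes K n I) : Unique (resBas F.b 0) where
  default := ⟨0, 0, by simp [F.hb0]⟩
  uniq := by
    rintro ⟨j, t⟩
    have hj : F.b 0 j = if j = 0 then 1 else 0 := F.hb0 j
    obtain rfl : j = 0 := by
      by_contra hne
      exact t.pos.ne' (hj.trans (if_neg hne))
    have : Subsingleton (Fin (F.b 0 0)) := Fin.subsingleton_iff_le_one.2 hj.le
    exact congrArg _ (Subsingleton.elim _ _)

/-- The resolution with its grading forgotten. -/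
noncomputable def toMinimalFreeResolution (F : MinFreeRes K n I) :
    MinimalFreeResolution (mIdeal K n) (MvPolynomial (Fin n) K ⧸ I) where
  Idx := resBas F.b
  fintype k := @Fintype.ofFinite _ (F.finite_resBas k)
  aug := Finsupp.linearCombination _ fun _ => 1
  d k := resMap (F.D k)
  aug_surjective x := by
    obtain ⟨p, rfl⟩ := Ideal.Quotient.mk_surjective x
    exact ⟨Finsupp.single default p, (linearCombination_one_eq_mk I _).trans
      (congrArg _ Finsupp.single_eq_same)⟩
  exact_aug := LinearMap.exact_iff.2 F.hexact0.symm
  exact k := LinearMap.exact_iff.2 (F.hexact k).symm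
  d_mem k x e' := by
    have hD (e) : F.D k e e' ∈ mIdeal K n := by
      obtain h | ⟨hlt, hhom⟩ := F.hhom k e e'
      · exact h ▸ zero_mem _
      · rw [mem_mIdeal_iff, constantCoeff_eq]
        refine hhom.coeff_eq_zero ?_
        rw [map_zero]
        exact (Nat.sub_pos_of_lt hlt).ne
    rw [resMap, Finsupp.linearCombination_apply, Finsupp.sum_apply]
    exact sum_mem fun e _ => Ideal.mul_mem_left _ _ (hD e)

theorem le_mIdeal (F : MinFreeRes K n I) : I ≤ mIdeal K n := fun p hp => by
  let z : resBas F.b 0 →₀ MvPolynomial (Fin n) K := Finsupp.single default p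
  have hz : z default = p := Finsupp.single_eq_same
  have hker : F.toMinimalFreeResolution.aug z = 0 :=
    (linearCombination_one_eq_mk I z).trans (Ideal.Quotient.eq_zero_iff_mem.2 (hz ▸ hp))
  exact hz ▸ F.toMinimalFreeResolution.isMinimalCover_aug.mem_of_mem_ker z hker
    (default : resBas F.b 0)

/-- The rank of the `k`-th free module of the resolution, i.e. the `k`-th total Betti number. -/
noncomputable def rank (F : MinFreeRes K n I) (k : ℕ) : ℕ := Nat.card (resBas F.b k)

theorem rank_eq_card (F : MinFreeRes K n I) (k : ℕ) :
    F.rank k = Fintype.card (F.toMinimalFreeResolution.Idx k) :=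
  @Nat.card_eq_fintype_card _ (F.toMinimalFreeResolution.fintype k)

theorem rank_eq_rank (F G : MinFreeRes K n I) : F.rank = G.rank := by
  funext k
  rw [F.rank_eq_card, G.rank_eq_card]
  exact F.toMinimalFreeResolution.card_idx_eq G.toMinimalFreeResolution k

theorem rank_eq_zero_iff (F : MinFreeRes K n I) (k : ℕ) : F.rank k = 0 ↔ ∀ j, F.b k j = 0 := by
  have := F.finite_resBas k
  rw [rank, Finite.card_eq_zero_iff, resBas, isEmpty_sigma]
  exact forall_congr' fun j => by rw [← Fintype.card_eq_zero_iff, Fintype.card_fin]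

theorem rank_eq_one_iff (F : MinFreeRes K n I) (k : ℕ) :
    F.rank k = 1 ↔ ∃ j₀, F.b k j₀ = 1 ∧ ∀ j, F.b k j ≠ 0 → j = j₀ := by
  rw [rank, Nat.card_eq_one_iff_exists]
  constructor
  · rintro ⟨⟨j₀, t₀⟩, huniq⟩
    have : Subsingleton (Fin (F.b k j₀)) :=
      ⟨fun s t => sigma_mk_injective (β := fun j => Fin (F.b k j))
        ((huniq ⟨j₀, s⟩).trans (huniq ⟨j₀, t⟩).symm)⟩
    exact ⟨j₀, (Fin.subsingleton_iff_le_one.1 this).antisymm t₀.pos,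
      fun j hj => congrArg Sigma.fst (huniq ⟨j, 0, Nat.pos_of_ne_zero hj⟩)⟩
  · rintro ⟨j₀, hone, huniq⟩
    refine ⟨⟨j₀, 0, hone ▸ Nat.one_pos⟩, ?_⟩
    rintro ⟨j, t⟩
    obtain rfl := huniq j t.pos.ne'
    have : Subsingleton (Fin (F.b k j)) := Fin.subsingleton_iff_le_one.2 hone.le
    exact congrArg _ (Subsingleton.elim _ _)

theorem gorQuot_iff (F : MinFreeRes K n I) :
    gorQuot K n I ↔ cmQuot K n I ∧ ∃ g, F.rank g = 1 ∧ ∀ k > g, F.rank k = 0 := by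
  refine and_congr_right fun _ => ⟨?_, ?_⟩
  · rintro ⟨G, hG⟩
    rw [F.rank_eq_rank G]
    exact ⟨G.len, (G.rank_eq_one_iff _).2 hG, fun k hk => (G.rank_eq_zero_iff k).2 (G.htop k hk)⟩
  · rintro ⟨g, hone, hzero⟩
    exact ⟨{ F with len := g, htop := fun k hk => (F.rank_eq_zero_iff k).1 (hzero k hk) },
      (F.rank_eq_one_iff g).1 hone⟩

theorem depthQuot_add_eq (F : MinFreeRes K n I) {g : ℕ} (hg : F.rank g ≠ 0)
    (hsucc : F.rank (g + 1) = 0) : depthQuot K n I + g = n := by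
  rw [rank_eq_card] at hg hsucc
  have : Nonempty (F.toMinimalFreeResolution.Idx g) :=
    Fintype.card_pos_iff.1 (Nat.pos_of_ne_zero hg)
  have : IsEmpty (F.toMinimalFreeResolution.Idx (g + 1)) := Fintype.card_eq_zero_iff.1 hsucc
  obtain ⟨d, hdg, hd⟩ :=
    F.toMinimalFreeResolution.exists_add_eq_and_hasGrade hasGrade_mvPolynomial (g := g)
  rw [hd.depthQuot_eq F.le_mIdeal, hdg]

theorem gorQuot_congr (F : MinFreeRes K n I) (G : MinFreeRes K n J) (hrank : F.rank = G.rank)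
    (hdim : ringKrullDim (MvPolynomial (Fin n) K ⧸ I) = ringKrullDim (MvPolynomial (Fin n) K ⧸ J)) :
    gorQuot K n I ↔ gorQuot K n J := by
  rw [F.gorQuot_iff, G.gorQuot_iff, ← hrank]
  refine and_congr_left fun ⟨g, hone, hzero⟩ => ?_
  have hg : F.rank g ≠ 0 := hone ▸ one_ne_zero
  have hsucc : F.rank (g + 1) = 0 := hzero _ (Nat.lt_succ_self g)
  have hdepth : depthQuot K n I = depthQuot K n J := by
    have hF := F.depthQuot_add_eq hg hsucc
    have hG := G.depthQuot_add_eq (hrank ▸ hg) (hrank ▸ hsucc)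
    omega
  rw [cmQuot, cmQuot, hdepth, hdim]

end MinFreeRes

/-! ### Frames of graded resolutions -/

section GradedVectorSpaces

open Set

variable {K E V A : Type*} [Field K] [AddCommGroup V] [Module K V]

/-- The span of the basis vectors of degree at most `a` in the vector space with basis `A`, the
basis vector `e` having degree `deg e`: the degree `a` component of the free module on generators
of degrees `deg e`. -/
abbrev degLE [Preorder E] (K : Type*) [Field K] (deg : A → E) (a : E) : Submodule K (A →₀ K) :=
  Finsupp.supported K K (deg ⁻¹' Iic a)

/-- The span of the basis vectors of degree less than `a`. -/
abbrev degLT [Preorder E] (K : Type*) [Field K] (deg : A → E) (a : E) : Submodule K (A →₀ K) :=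
  Finsupp.supported K K (deg ⁻¹' Iio a)

theorem degLE_comp {F : Type*} [Preorder E] [Preorder F] {deg : A → E} {φ : E → F} {ψ : F → E}
    (hgc : GaloisConnection φ ψ) (a : F) : degLE K (φ ∘ deg) a = degLE K deg (ψ a) :=
  congrArg (Finsupp.supported K K) (Set.ext fun e => hgc (deg e) a)

variable [PartialOrder E]

/-- A minimal system of homogeneous generators of an increasing family `Z` of subspaces: the
generators of degree at most `a` span `Z a`, and no relation in degree `a` involves a generator of
degree `a`. -/
structure MinimalGenerators (Z : E →o Submodule K V) where
  Idx : Type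
  [fintype : Fintype Idx]
  deg : Idx → E
  vec : Idx → V
  map_degLE : ∀ a, (degLE K deg a).map (Finsupp.linearCombination K vec) = Z a
  minimal : ∀ a, degLE K deg a ⊓ LinearMap.ker (Finsupp.linearCombination K vec) ≤ degLT K deg a

end GradedVectorSpaces

section MinimalGenerators

open Set

variable {K E V A : Type*} [Field K] [AddCommGroup V] [Module K V] [PartialOrder E]
  {Z : E →o Submodule K V} {deg : A → E} {vec : A → V}

theorem span_image_Iic_eq [WellFoundedLT E]
    (hsup : ∀ a, (⨆ b < a, Z b) ⊔ Submodule.span K (vec '' (deg ⁻¹' {a})) = Z a) (a : E) :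
    Submodule.span K (vec '' (deg ⁻¹' Iic a)) = Z a := by
  refine le_antisymm (Submodule.span_le.2 ?_) ?_
  · rintro _ ⟨e, he, rfl⟩
    refine Z.monotone (mem_Iic.1 he) ?_
    rw [← hsup]
    exact Submodule.mem_sup_right (Submodule.subset_span ⟨e, rfl, rfl⟩)
  · induction a using WellFoundedLT.induction with
    | ind a ih =>
      rw [← hsup]
      refine sup_le (iSup₂_le fun b hb => (ih b hb).trans ?_) ?_ <;>
        refine Submodule.span_mono (image_mono (preimage_mono ?_))
      · exact Iic_subset_Iic.2 hb.le
      · exact singleton_subset_iff.2 self_mem_Iic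

theorem degLE_inf_ker_le_degLT (hvec : ∀ e, vec e ∈ Z (deg e))
    (hind : ∀ a, LinearIndepOn K vec (deg ⁻¹' {a}))
    (hdisj : ∀ a, Disjoint (⨆ b < a, Z b) (Submodule.span K (vec '' (deg ⁻¹' {a})))) (a : E) :
    degLE K deg a ⊓ LinearMap.ker (Finsupp.linearCombination K vec) ≤ degLT K deg a := by
  rintro f ⟨hf, hker⟩
  rw [SetLike.mem_coe, degLE, ← Iio_union_right, preimage_union, Finsupp.supported_union] at hf
  obtain ⟨low, hlow, top, htop, rfl⟩ := Submodule.mem_sup.1 hf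
  have hlow_mem : Finsupp.linearCombination K vec low ∈ ⨆ b < a, Z b := by
    have hle : Submodule.span K (vec '' (deg ⁻¹' Iio a)) ≤ ⨆ b < a, Z b := by
      refine Submodule.span_le.2 ?_
      rintro _ ⟨e, he, rfl⟩
      exact le_iSup₂_of_le (f := fun b _ => Z b) (deg e) he le_rfl (hvec e)
    refine hle ?_
    rw [Finsupp.span_image_eq_map_linearCombination]
    exact Submodule.mem_map_of_mem hlow
  have htop_mem : Finsupp.linearCombination K vec top ∈
      Submodule.span K (vec '' (deg ⁻¹' {a})) := by
    rw [Finsupp.span_image_eq_map_linearCombination]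
    exact Submodule.mem_map_of_mem htop
  have htop_eq : Finsupp.linearCombination K vec top = -Finsupp.linearCombination K vec low :=
    eq_neg_of_add_eq_zero_right ((map_add _ _ _).symm.trans hker)
  have htop_zero : top = 0 := linearIndepOn_iff.1 (hind a) top htop
    (Submodule.disjoint_def.1 (hdisj a) _ (htop_eq ▸ neg_mem hlow_mem) htop_mem)
  rwa [htop_zero, add_zero]

theorem exists_minimalGenerators {E : Type} [PartialOrder E] [Finite E] [Module.Finite K V]
    (Z : E →o Submodule K V) : Nonempty (MinimalGenerators Z) := by
  have := Fintype.ofFinite E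
  choose C hdisj hsup using fun a : E => IsModularLattice.exists_disjoint_and_sup_eq
    (iSup₂_le fun b (hb : b < a) => Z.monotone hb.le : ⨆ b < a, Z b ≤ Z a)
  let basis (a : E) := Module.finBasis K (C a)
  let vec : (Σ a, Fin (Module.finrank K (C a))) → V := fun e => basis e.1 e.2
  have hspan (a : E) : Submodule.span K (vec '' (Sigma.fst ⁻¹' {a})) = C a := by
    rw [← range_sigmaMk, ← range_comp]
    change Submodule.span K (range ((C a).subtype ∘ basis a)) = C a
    rw [range_comp, Submodule.span_image, (basis a).span_eq, Submodule.map_top,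
      Submodule.range_subtype]
  have hind (a : E) : LinearIndepOn K vec (Sigma.fst ⁻¹' {a}) := by
    rw [← range_sigmaMk, linearIndepOn_range_iff sigma_mk_injective]
    exact (basis a).linearIndependent.map' (C a).subtype (C a).ker_subtype
  refine ⟨⟨_, Sigma.fst, vec, fun a => ?_,
    degLE_inf_ker_le_degLT (Z := Z) (fun e => ?_) hind fun a => ?_⟩⟩
  · rw [← Finsupp.span_image_eq_map_linearCombination]
    exact span_image_Iic_eq (fun b => (hspan b).symm ▸ hsup b) a
  · exact (hsup e.1).le (Submodule.mem_sup_right (basis e.1 e.2).2)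
  · exact (hspan a).symm ▸ hdisj a

theorem MinimalGenerators.vec_mem (G : MinimalGenerators Z) (e : G.Idx) :
    G.vec e ∈ Z (G.deg e) := by
  rw [← G.map_degLE]
  exact ⟨Finsupp.single e 1, Finsupp.single_mem_supported K 1 self_mem_Iic, by
    rw [Finsupp.linearCombination_single, one_smul]⟩

end MinimalGenerators

section Frames

open Set

variable {K E E' : Type} [Field K] [PartialOrder E] [OrderBot E] [PartialOrder E'] [OrderBot E']

/-- The degree-by-degree form of a minimal `E`-graded free resolution of the quotient by the
monomial ideal whose monomials have degrees in `U`. The coefficient of a graded differential at a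
pair of basis elements is a monomial determined by their degrees times a scalar, and a frame records
the scalars only: in degree `a` the complex consists of the spaces `degLE K (deg k) a`. -/
structure GradedFrame (K E : Type) [Field K] [PartialOrder E] [OrderBot E] (U : UpperSet E) where
  Idx : ℕ → Type
  [fintype : ∀ k, Fintype (Idx k)]
  [unique : Unique (Idx 0)]
  deg : ∀ k, Idx k → E
  deg_zero : ∀ e, deg 0 e = ⊥
  w : ∀ k, Idx (k + 1) → (Idx k →₀ K)
  w_mem : ∀ k e, w k e ∈ degLT K (deg k) (deg (k + 1) e)
  exact_zero : ∀ a, (degLE K (deg 1) a).map (Finsupp.linearCombination K (w 0)) = ⨆ _ : a ∈ U, ⊤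
  exact : ∀ k a, (degLE K (deg (k + 2)) a).map (Finsupp.linearCombination K (w (k + 1))) =
    degLE K (deg (k + 1)) a ⊓ LinearMap.ker (Finsupp.linearCombination K (w k))

attribute [instance] GradedFrame.fintype GradedFrame.unique

/-- One step in the construction of a `GradedFrame`: the basis of a free module and, in each degree,
the space of cycles that the next free module has to cover. -/
structure FrameStage (K E : Type) [Field K] [PartialOrder E] where
  Idx : Type
  [fintype : Fintype Idx]
  deg : Idx → E
  cycles : E →o Submodule K (Idx →₀ K)
  cycles_le : ∀ a, cycles a ≤ degLT K deg a

namespace FrameStage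

attribute [instance] fintype

/-- Minimal generators of the cycles. -/
noncomputable def gens [Finite E] (S : FrameStage K E) : MinimalGenerators S.cycles :=
  (exists_minimalGenerators S.cycles).some

/-- The free module on minimal generators of the cycles, its cycles being their relations. -/
noncomputable def next [Finite E] (S : FrameStage K E) : FrameStage K E where
  Idx := S.gens.Idx
  fintype := S.gens.fintype
  deg := S.gens.deg
  cycles :=
    { toFun a := degLE K S.gens.deg a ⊓ LinearMap.ker (Finsupp.linearCombination K S.gens.vec)
      monotone' _ _ hab := inf_le_inf_right _
        (Finsupp.supported_mono (preimage_mono (Iic_subset_Iic.2 hab))) }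
  cycles_le := S.gens.minimal

/-- The free module of rank one with generator in degree `⊥`, its cycles being the ideal. -/
noncomputable def start (K : Type) [Field K] {U : UpperSet E} (hU : ⊥ ∉ U) : FrameStage K E where
  Idx := Unit
  deg _ := ⊥
  cycles :=
    { toFun a := ⨆ _ : a ∈ U, ⊤
      monotone' _ _ hab := iSup_const_mono (U.upper hab) }
  cycles_le a := iSup_le fun ha => by
    have hlt : ⊥ < a := bot_lt_iff_ne_bot.2 (ne_of_mem_of_not_mem ha hU)
    rw [degLT, preimage_const_of_mem (mem_Iio.2 hlt), Finsupp.supported_univ]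

/-- The stages of the construction of a `GradedFrame`. -/
noncomputable def stage (K : Type) [Field K] [Finite E] {U : UpperSet E} (hU : ⊥ ∉ U) :
    ℕ → FrameStage K E
  | 0 => start K hU
  | k + 1 => (stage K hU k).next

end FrameStage

namespace GradedFrame

theorem nonempty_of_bot_notMem [Finite E] {U : UpperSet E} (hU : ⊥ ∉ U) :
    Nonempty (GradedFrame K E U) :=
  ⟨{  Idx := fun k => (FrameStage.stage K hU k).Idx
      unique := inferInstanceAs (Unique Unit)
      deg := fun k => (FrameStage.stage K hU k).deg
      deg_zero := fun _ => rfl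
      w := fun k => (FrameStage.stage K hU k).gens.vec
      w_mem := fun k e => (FrameStage.stage K hU k).cycles_le _ (MinimalGenerators.vec_mem _ e)
      exact_zero := (FrameStage.stage K hU 0).gens.map_degLE
      exact := fun k => (FrameStage.stage K hU (k + 1)).gens.map_degLE }⟩

variable {U : UpperSet E} (P : GradedFrame K E U)

theorem w_ne_zero (k : ℕ) (e : P.Idx (k + 1)) : P.w k e ≠ 0 := fun h0 => by
  have hcycle : Finsupp.single e (1 : K) ∈ degLE K (P.deg (k + 1)) (P.deg (k + 1) e) ⊓
      LinearMap.ker (Finsupp.linearCombination K (P.w k)) :=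
    ⟨Finsupp.single_mem_supported K 1 self_mem_Iic, by
      rw [SetLike.mem_coe, LinearMap.mem_ker, Finsupp.linearCombination_single, h0, smul_zero]⟩
  have hle : (degLE K (P.deg (k + 2)) (P.deg (k + 1) e)).map
      (Finsupp.linearCombination K (P.w (k + 1))) ≤ degLT K (P.deg (k + 1)) (P.deg (k + 1) e) := by
    rw [← Finsupp.span_image_eq_map_linearCombination, Submodule.span_le]
    rintro _ ⟨e', he', rfl⟩
    exact Finsupp.supported_mono (preimage_mono (Iio_subset_Iio he')) (P.w_mem (k + 1) e')
  exact lt_irrefl _ (hle ((P.exact k _).ge hcycle)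
    (Finsupp.mem_support_iff.2 (Finsupp.single_eq_same.trans_ne one_ne_zero)))

theorem exists_deg_lt (k : ℕ) (e : P.Idx (k + 1)) : ∃ e', P.deg k e' < P.deg (k + 1) e := by
  obtain ⟨e', he'⟩ := Finsupp.support_nonempty_iff.2 (P.w_ne_zero k e)
  exact ⟨e', P.w_mem k e he'⟩

theorem exists_ltSeries (k : ℕ) (e : P.Idx k) :
    ∃ s : LTSeries E, s.length = k ∧ s.last = P.deg k e := by
  induction k with
  | zero => exact ⟨RelSeries.singleton _ (P.deg 0 e), rfl, rfl⟩
  | succ k ih =>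
    obtain ⟨e', hlt⟩ := P.exists_deg_lt k e
    obtain ⟨s, hlen, hlast⟩ := ih e'
    exact ⟨s.snoc (P.deg (k + 1) e) (hlast ▸ hlt), congrArg Nat.succ hlen, s.last_snoc _ _⟩

theorem isEmpty_idx [Finite E] {k : ℕ} (hk : Nat.card E ≤ k) : IsEmpty (P.Idx k) := by
  have := Fintype.ofFinite E
  refine ⟨fun e => ?_⟩
  obtain ⟨s, rfl, -⟩ := P.exists_ltSeries k e
  exact (s.length_lt_card.trans_le (Nat.card_eq_fintype_card.symm.trans_le hk)).false

/-- Relabelling of the degrees. The upper adjoint `ψ` sends a degree to the largest old degree below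
it, so that the relabelled complex in degree `a` is the old one in degree `ψ a`. -/
def map {U' : UpperSet E'} {φ : E → E'} {ψ : E' → E} (hφ : StrictMono φ)
    (hgc : GaloisConnection φ ψ) (hU : ∀ a, a ∈ U' ↔ ψ a ∈ U) : GradedFrame K E' U' where
  Idx := P.Idx
  deg k := φ ∘ P.deg k
  deg_zero e := (congrArg φ (P.deg_zero e)).trans hgc.l_bot
  w := P.w
  w_mem k e := Finsupp.supported_mono (fun _ h => hφ h) (P.w_mem k e)
  exact_zero a := by simp only [degLE_comp hgc, hU, P.exact_zero]
  exact k a := by simp only [degLE_comp hgc, P.exact]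

end GradedFrame

end Frames

/-! ### From frames to resolutions -/

section Strand

open Set

variable {K σ A B : Type*} [Field K]

/-- The `R`-linear extension to degree `a` of a vector of scalars: the basis vector `e`, of degree
`deg e`, is multiplied by the monomial of degree `a - deg e`. On vectors outside `degLE K deg a`
the truncated subtraction makes it meaningless. -/
noncomputable def homogenize (deg : B → σ →₀ ℕ) (a : σ →₀ ℕ) :
    (B →₀ K) →ₗ[K] (B →₀ MvPolynomial σ K) :=
  Finsupp.lsum K fun e => Finsupp.lsingle e ∘ₗ monomial (a - deg e)

open Classical in
/-- The homogeneous component of degree `a` of an element of the free module on generators of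
degrees `deg e`, a basis of this component being identified with the generators of degree at most
`a`. -/
noncomputable def strand (deg : B → σ →₀ ℕ) (a : σ →₀ ℕ) :
    (B →₀ MvPolynomial σ K) →ₗ[K] (B →₀ K) :=
  Finsupp.lsum K fun e => if deg e ≤ a then Finsupp.lsingle e ∘ₗ lcoeff K (a - deg e) else 0

variable {deg : B → σ →₀ ℕ} {deg' : A → σ →₀ ℕ} {w : A → (B →₀ K)}

theorem homogenize_apply (a : σ →₀ ℕ) (f : B →₀ K) (e : B) :
    homogenize deg a f e = monomial (a - deg e) (f e) := by
  classical
  rw [homogenize, Finsupp.lsum_apply, Finsupp.sum_apply, Finsupp.sum]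
  simp +contextual [Finsupp.single_apply]

open Classical in
theorem strand_apply (a : σ →₀ ℕ) (z : B →₀ MvPolynomial σ K) (e : B) :
    strand deg a z e = if deg e ≤ a then coeff (a - deg e) (z e) else 0 := by
  rw [strand, Finsupp.lsum_apply, Finsupp.sum_apply, Finsupp.sum, Finset.sum_eq_single e]
  · split_ifs with h
    · exact Finsupp.single_eq_same
    · rfl
  · intro b _ hb
    split_ifs with h
    · exact Finsupp.single_eq_of_ne hb.symm
    · rfl
  · intro he
    rw [Finsupp.notMem_support_iff.1 he, map_zero, Finsupp.zero_apply]

theorem strand_mem_degLE (a : σ →₀ ℕ) (z : B →₀ MvPolynomial σ K) :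
    strand deg a z ∈ degLE K deg a := by
  intro e he
  by_contra hle
  exact Finsupp.mem_support_iff.1 he ((strand_apply a z e).trans (if_neg hle))

theorem strand_deg_add_apply (z : B →₀ MvPolynomial σ K) (e : B) (m : σ →₀ ℕ) :
    strand deg (deg e + m) z e = coeff m (z e) := by
  rw [strand_apply, if_pos le_self_add, add_tsub_cancel_left]

theorem strand_ext {y z : B →₀ MvPolynomial σ K} (h : ∀ a, strand deg a y = strand deg a z) :
    y = z := by
  ext e m
  rw [← strand_deg_add_apply (deg := deg), h, strand_deg_add_apply]

theorem finite_strand_ne_zero (z : B →₀ MvPolynomial σ K) : {a | strand deg a z ≠ 0}.Finite := by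
  refine (z.support.finite_toSet.biUnion fun e _ =>
    (z e).support.finite_toSet.image (deg e + ·)).subset fun a ha => ?_
  obtain ⟨e, he⟩ := Finsupp.support_nonempty_iff.2 ha
  have hle : deg e ≤ a := strand_mem_degLE a z he
  have hcoeff : coeff (a - deg e) (z e) ≠ 0 := by
    rw [← strand_deg_add_apply (deg := deg), add_tsub_cancel_of_le hle]
    exact Finsupp.mem_support_iff.1 he
  have hze : z e ≠ 0 := fun h0 => hcoeff (by rw [h0, coeff_zero])
  exact mem_biUnion (Finsupp.mem_support_iff.2 hze)
    ⟨a - deg e, mem_support_iff.2 hcoeff, add_tsub_cancel_of_le hle⟩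

open Classical in
theorem strand_monomial_smul_homogenize {b : σ →₀ ℕ} {f : B →₀ K} (hf : f ∈ degLE K deg b)
    (a m : σ →₀ ℕ) (c : K) :
    strand deg a (monomial m c • homogenize deg b f) = if b + m = a then c • f else 0 := by
  ext e
  rw [strand_apply, Finsupp.smul_apply, homogenize_apply, smul_eq_mul, monomial_mul, coeff_monomial]
  by_cases he : f e = 0
  · simp only [he, mul_zero, ite_self]
    split_ifs <;> simp [he]
  · have hle : deg e ≤ b := hf (Finsupp.mem_support_iff.2 he)
    by_cases hba : b + m = a
    · subst hba
      rw [if_pos (hle.trans le_self_add), if_pos (by rw [add_comm m, tsub_add_eq_add_tsub hle]),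
        if_pos rfl, Finsupp.smul_apply, smul_eq_mul]
    · rw [if_neg hba, Finsupp.zero_apply, ite_eq_right_iff]
      intro hea
      refine if_neg fun h => hba ?_
      rw [← tsub_add_cancel_of_le hea, ← h, add_assoc, tsub_add_cancel_of_le hle, add_comm]

open Classical in
theorem strand_homogenize {b : σ →₀ ℕ} {f : B →₀ K} (hf : f ∈ degLE K deg b) (a : σ →₀ ℕ) :
    strand deg a (homogenize deg b f) = if b = a then f else 0 := by
  simpa only [monomial_zero', C_1, one_smul, add_zero] using
    strand_monomial_smul_homogenize hf a 0 1

open Classical in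
theorem strand_single_monomial (a m : σ →₀ ℕ) (e : B) (c : K) :
    strand deg a (Finsupp.single e (monomial m c)) =
      if deg e + m = a then Finsupp.single e c else 0 := by
  have hsingle : Finsupp.single e (monomial m c) =
      monomial m c • homogenize deg (deg e) (Finsupp.single e 1) := by
    rw [homogenize, Finsupp.lsum_single, LinearMap.comp_apply, tsub_self, monomial_zero', C_1,
      Finsupp.lsingle_apply, Finsupp.smul_single, smul_eq_mul, mul_one]
  rw [hsingle, strand_monomial_smul_homogenize (Finsupp.single_mem_supported K 1 (le_refl (deg e))),
    Finsupp.smul_single, smul_eq_mul, mul_one]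

theorem strand_resMap (hw : ∀ e, w e ∈ degLE K deg (deg' e)) (a : σ →₀ ℕ)
    (z : A →₀ MvPolynomial σ K) :
    strand deg a (resMap (fun e => homogenize deg (deg' e) (w e)) z) =
      Finsupp.linearCombination K w (strand deg' a z) := by
  classical
  rw [resMap]
  induction z using Finsupp.induction_linear with
  | zero => simp only [map_zero]
  | add y z hy hz => simp only [map_add, hy, hz]
  | single e p =>
    induction p using MvPolynomial.induction_on' with
    | add p q hp hq => simp only [Finsupp.single_add, map_add, hp, hq]
    | monomial m c =>
      rw [Finsupp.linearCombination_single, strand_monomial_smul_homogenize (hw e),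
        strand_single_monomial]
      split_ifs
      · rw [Finsupp.linearCombination_single]
      · rw [map_zero]

theorem mem_range_resMap_iff (hw : ∀ e, w e ∈ degLE K deg (deg' e)) (z : B →₀ MvPolynomial σ K) :
    z ∈ range (resMap fun e => homogenize deg (deg' e) (w e)) ↔
      ∀ a, strand deg a z ∈ (degLE K deg' a).map (Finsupp.linearCombination K w) := by
  classical
  constructor
  · rintro ⟨y, rfl⟩ a
    rw [strand_resMap hw]
    exact Submodule.mem_map_of_mem (strand_mem_degLE a y)
  · intro hz
    choose y hy hyz using hz
    have hfin := finite_strand_ne_zero (deg := deg) z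
    refine ⟨∑ a ∈ hfin.toFinset, homogenize deg' a (y a), strand_ext (deg := deg) fun b => ?_⟩
    rw [strand_resMap hw, map_sum]
    simp only [strand_homogenize (hy _), Finset.sum_ite_eq']
    split_ifs with hb
    · exact hyz b
    · rw [map_zero]
      exact (not_not.1 fun h => hb (hfin.mem_toFinset.2 h)).symm

end Strand

section Regrading

open Set

variable {K : Type} [Field K] {n : ℕ} {I : Ideal (MvPolynomial (Fin n) K)} {B : ℕ → Type}
  [∀ k, Fintype (B k)]

/-- The number of basis elements of each degree, in the form of graded Betti numbers. -/
def degreeCount (δ : ∀ k, B k → ℕ) (k j : ℕ) : ℕ := Fintype.card {e : B k // δ k e = j}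

/-- The enumeration of basis elements by their degrees. -/
noncomputable def equivResBas (δ : ∀ k, B k → ℕ) (k : ℕ) : B k ≃ resBas (degreeCount δ) k :=
  (Equiv.sigmaFiberEquiv (δ k)).symm.trans (Equiv.sigmaCongrRight fun _ => Fintype.equivFin _)

theorem finite_support_degreeCount (δ : ∀ k, B k → ℕ) {g : ℕ} (hg : ∀ k > g, IsEmpty (B k)) :
    (Function.support fun kj : ℕ × ℕ => degreeCount δ kj.1 kj.2).Finite := by
  refine (finite_range fun s : Σ k : Fin (g + 1), B k => ((s.1 : ℕ), δ _ s.2)).subset ?_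
  rintro ⟨k, j⟩ hkj
  obtain ⟨e, he⟩ := Fintype.card_pos_iff.1 (Nat.pos_of_ne_zero hkj)
  have hk : k < g + 1 := by
    by_contra! hlt
    exact (hg k hlt).false e
  exact ⟨⟨⟨k, hk⟩, e⟩, Prod.ext rfl he⟩

theorem linearCombination_comp_domLCongr {R A A' B B' : Type*} [CommRing R] (eA : A ≃ A')
    (eB : B ≃ B') (D : A → (B →₀ R)) :
    Finsupp.linearCombination R (fun a => Finsupp.domLCongr (R := R) eB (D (eA.symm a))) ∘ₗ
        (Finsupp.domLCongr (M := R) (R := R) eA).toLinearMap =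
      (Finsupp.domLCongr (M := R) (R := R) eB).toLinearMap ∘ₗ Finsupp.linearCombination R D := by
  ext1 a
  ext1
  simp

theorem MinFreeRes.exists_rank_eq_card [Unique (B 0)] {δ : ∀ k, B k → ℕ} (hδ : ∀ e, δ 0 e = 0)
    {g : ℕ} (hg : ∀ k > g, IsEmpty (B k))
    {D : ∀ k, B (k + 1) → (B k →₀ MvPolynomial (Fin n) K)}
    (hhom : ∀ k e e', D k e e' = 0 ∨
      δ k e' < δ (k + 1) e ∧ (D k e e').IsHomogeneous (δ (k + 1) e - δ k e'))
    (hexact : ∀ k, Function.Exact (resMap (D (k + 1))) (resMap (D k)))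
    (hexact0 : Function.Exact (resMap (D 0)) (Finsupp.linearCombination (MvPolynomial (Fin n) K)
      fun _ : B 0 => (1 : MvPolynomial (Fin n) K ⧸ I))) :
    ∃ F : MinFreeRes K n I, ∀ k, F.rank k = Fintype.card (B k) := by
  let ε := equivResBas δ
  let D' (k : ℕ) (e : resBas (degreeCount δ) (k + 1)) :=
    Finsupp.domLCongr (R := MvPolynomial (Fin n) K) (ε k) (D k ((ε (k + 1)).symm e))
  have hladder (k : ℕ) := linearCombination_comp_domLCongr (ε (k + 1)) (ε k) (D k)
  refine ⟨⟨g, degreeCount δ, fun j => ?_, fun k hk j => ?_, finite_support_degreeCount δ hg, D',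
    fun k e e' => ?_, fun k => ?_, ?_⟩, fun k => ?_⟩
  · rw [degreeCount, Fintype.card_subtype]
    simp only [hδ]
    split_ifs with hj
    · simp [hj]
    · simp [Ne.symm hj]
  · have := hg k hk
    exact Fintype.card_eq_zero
  · obtain ⟨e, rfl⟩ := (ε (k + 1)).surjective e
    obtain ⟨e', rfl⟩ := (ε k).surjective e'
    have hD' : D' k (ε (k + 1) e) (ε k e') = D k e e' := by simp [D']
    exact hD' ▸ hhom k e e'
  · exact (LinearMap.exact_iff.1 (.of_ladder_linearEquiv_of_exact (hladder (k + 1)) (hladder k)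
      (hexact k))).symm
  · refine (LinearMap.exact_iff.1 (.of_ladder_linearEquiv_of_exact (e₃ := .refl _ _) (hladder 0) ?_
      hexact0)).symm
    ext1 a
    ext1
    simp
  · exact (Nat.card_congr (ε k).symm).trans Nat.card_eq_fintype_card

end Regrading

section ResolutionOfFrame

open Set

variable {K : Type} [Field K] {n q : ℕ}

theorem mem_monIdeal_iff {u : Fin q → Fin n →₀ ℕ} {p : MvPolynomial (Fin n) K} :
    p ∈ monIdeal K u ↔ ∀ m ∈ p.support, ∃ j, u j ≤ m := by
  rw [monIdeal, range_comp' (monomial · (1 : K)) u, mem_ideal_span_monomial_image]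
  simp only [exists_range_iff]

namespace GradedFrame

variable {U : UpperSet (Fin n →₀ ℕ)}

/-- The differential of the free resolution described by a frame. -/
noncomputable def differential (P : GradedFrame K (Fin n →₀ ℕ) U)
    (k : ℕ) (e : P.Idx (k + 1)) : P.Idx k →₀ MvPolynomial (Fin n) K :=
  homogenize (P.deg k) (P.deg (k + 1) e) (P.w k e)

variable (P : GradedFrame K (Fin n →₀ ℕ) U)

theorem w_mem_degLE (k : ℕ) (e : P.Idx (k + 1)) :
    P.w k e ∈ degLE K (P.deg k) (P.deg (k + 1) e) :=
  Finsupp.supported_mono (preimage_mono Iio_subset_Iic_self) (P.w_mem k e)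

theorem differential_eq_zero_or_isHomogeneous (k : ℕ) (e : P.Idx (k + 1)) (e' : P.Idx k) :
    P.differential k e e' = 0 ∨ (P.deg k e').degree < (P.deg (k + 1) e).degree ∧
      (P.differential k e e').IsHomogeneous ((P.deg (k + 1) e).degree - (P.deg k e').degree) := by
  rw [differential, homogenize_apply]
  by_cases h0 : P.w k e e' = 0
  · exact .inl (by rw [h0, map_zero])
  · have hlt : P.deg k e' < P.deg (k + 1) e := P.w_mem k e (Finsupp.mem_support_iff.2 h0)
    obtain ⟨c, hc⟩ := exists_add_of_le hlt.le
    have hdegree : (P.deg (k + 1) e).degree = (P.deg k e').degree + c.degree := by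
      rw [hc, map_add]
    have hpos : c.degree ≠ 0 := by
      rw [Ne, Finsupp.degree_eq_zero_iff]
      rintro rfl
      exact hlt.ne' (hc.trans (add_zero _))
    refine .inr ⟨by omega, isHomogeneous_monomial _ ?_⟩
    rw [hdegree, hc, add_tsub_cancel_left, add_tsub_cancel_left]

theorem exact_differential (k : ℕ) :
    Function.Exact (resMap (P.differential (k + 1))) (resMap (P.differential k)) := by
  intro z
  refine Iff.trans ?_ (mem_range_resMap_iff (P.w_mem_degLE (k + 1)) z).symm
  have hstrand (a) := strand_resMap (P.w_mem_degLE k) a z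
  simp only [P.exact, Submodule.mem_inf, strand_mem_degLE, true_and, LinearMap.mem_ker, ← hstrand]
  refine ⟨fun h a => (congrArg _ h).trans (map_zero _),
    fun h => strand_ext (deg := P.deg k) fun a => ?_⟩
  exact (h a).trans (map_zero _).symm

theorem exact_augmentation {u : Fin q → Fin n →₀ ℕ}
    (P : GradedFrame K (Fin n →₀ ℕ) (upperClosure (range u))) :
    Function.Exact (resMap (P.differential 0))
      (Finsupp.linearCombination (MvPolynomial (Fin n) K)
        fun _ : P.Idx 0 => (1 : MvPolynomial (Fin n) K ⧸ monIdeal K u)) := by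
  intro z
  refine Iff.trans ?_ (mem_range_resMap_iff (P.w_mem_degLE 0) z).symm
  have hstrand (a) : strand (P.deg 0) a z = 0 ↔ a ∉ (z default).support := by
    rw [notMem_support_iff, ← strand_deg_add_apply (deg := P.deg 0), P.deg_zero,
      bot_eq_zero, zero_add, Finsupp.ext_iff, Unique.forall_iff, Finsupp.zero_apply]
  rw [linearCombination_one_eq_mk, Ideal.Quotient.eq_zero_iff_mem, mem_monIdeal_iff]
  refine forall_congr' fun a => ?_
  have hU : a ∈ upperClosure (range u) ↔ ∃ j, u j ≤ a := by
    simp only [mem_upperClosure, exists_range_iff]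
  rw [P.exact_zero]
  by_cases ha : ∃ j, u j ≤ a
  · simp only [hU, ha, implies_true, iSup_pos, Submodule.mem_top]
  · simp only [hU, ha, imp_false, iSup_neg, not_false_eq_true, Submodule.mem_bot, hstrand]

theorem exists_minFreeRes {u : Fin q → Fin n →₀ ℕ}
    (P : GradedFrame K (Fin n →₀ ℕ) (upperClosure (range u))) {g : ℕ}
    (hg : ∀ k > g, IsEmpty (P.Idx k)) :
    ∃ F : MinFreeRes K n (monIdeal K u), ∀ k, F.rank k = Fintype.card (P.Idx k) :=
  MinFreeRes.exists_rank_eq_card (δ := fun k e => (P.deg k e).degree)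
    (fun e => by rw [P.deg_zero, bot_eq_zero, map_zero]) hg
    P.differential_eq_zero_or_isHomogeneous P.exact_differential P.exact_augmentation

end GradedFrame

end ResolutionOfFrame

/-! ### Relabelling and the signature -/

section Relabel

open Set

theorem exists_galoisConnection {α β : Type*} [LinearOrder α] [OrderBot α] [Finite α] [Preorder β]
    [OrderBot β] {f : α → β} (hf : Monotone f) (hbot : f ⊥ = ⊥) : ∃ g, GaloisConnection f g := by
  choose g hg hmax using fun b => exists_max_image {x | f x ≤ b} id (toFinite _)
    ⟨⊥, hbot.trans_le bot_le⟩
  exact ⟨g, fun x b => ⟨hmax b x, fun h => (hf h).trans (hg b)⟩⟩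

variable {n : ℕ} {α : Fin n → Type}

/-- The exponent vector with labels `a i` replaced by the numbers `f i (a i)`. -/
noncomputable def relabel (f : ∀ i, α i → ℕ) (a : ∀ i, α i) : Fin n →₀ ℕ :=
  Finsupp.equivFunOnFinite.symm fun i => f i (a i)

theorem relabel_apply (f : ∀ i, α i → ℕ) (a : ∀ i, α i) (i : Fin n) : relabel f a i = f i (a i) :=
  rfl

variable [∀ i, LinearOrder (α i)] {f f' : ∀ i, α i → ℕ}

theorem strictMono_relabel (hf : ∀ i, StrictMono (f i)) : StrictMono (relabel f) := by
  intro a b hab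
  obtain ⟨hle, i, hlt⟩ := Pi.lt_def.1 hab
  exact Finsupp.lt_def.2 ⟨fun i => (hf i).monotone (hle i), i, hf i hlt⟩

variable [∀ i, OrderBot (α i)]

theorem relabel_bot (hbot : ∀ i, f i ⊥ = 0) : relabel f ⊥ = 0 :=
  Finsupp.ext hbot

theorem exists_galoisConnection_relabel [∀ i, Finite (α i)] (hf : ∀ i, Monotone (f i))
    (hbot : ∀ i, f i ⊥ = 0) : ∃ g, GaloisConnection (relabel f) g := by
  choose g hg using fun i => exists_galoisConnection (hf i) (hbot i)
  exact ⟨fun b i => g i (b i), fun a b => forall_congr' fun i => hg i (a i) (b i)⟩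

variable {K : Type} [Field K] {q : ℕ} {c : Fin q → ∀ i, α i}

theorem exists_minFreeRes_relabel [∀ i, Finite (α i)]
    (P : GradedFrame K (∀ i, α i) (upperClosure (range c)))
    (hf : ∀ i, StrictMono (f i)) (hbot : ∀ i, f i ⊥ = 0) :
    ∃ F : MinFreeRes K n (monIdeal K fun j => relabel f (c j)),
      ∀ k, F.rank k = Fintype.card (P.Idx k) := by
  obtain ⟨g, hg⟩ := exists_galoisConnection_relabel (fun i => (hf i).monotone) hbot
  have hU (b : Fin n →₀ ℕ) : b ∈ upperClosure (range fun j => relabel f (c j)) ↔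
      g b ∈ upperClosure (range c) := by
    simp only [mem_upperClosure, exists_range_iff, hg _ _]
  exact (P.map (strictMono_relabel hf) hg hU).exists_minFreeRes fun k hk => P.isEmpty_idx hk.le

theorem mem_zeroLocus_monIdeal_iff {u : Fin q → Fin n →₀ ℕ}
    {p : PrimeSpectrum (MvPolynomial (Fin n) K)} :
    p ∈ PrimeSpectrum.zeroLocus (monIdeal K u : Set (MvPolynomial (Fin n) K)) ↔
      ∀ j, ∃ i ∈ (u j).support, X i ∈ p.asIdeal := by
  rw [PrimeSpectrum.mem_zeroLocus, SetLike.coe_subset_coe, monIdeal, Ideal.span_le,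
    range_subset_iff]
  refine forall_congr' fun j => ?_
  rw [SetLike.mem_coe, monomial_eq, C_1, one_mul, Finsupp.prod, p.2.prod_mem_iff]
  exact exists_congr fun i => and_congr_right fun hi =>
    p.2.pow_mem_iff_mem _ (Nat.pos_of_ne_zero (Finsupp.mem_support_iff.1 hi))

theorem ringKrullDim_quotient_monIdeal_congr {u u' : Fin q → Fin n →₀ ℕ}
    (h : ∀ j, (u j).support = (u' j).support) :
    ringKrullDim (MvPolynomial (Fin n) K ⧸ monIdeal K u) =
      ringKrullDim (MvPolynomial (Fin n) K ⧸ monIdeal K u') := by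
  have hlocus : PrimeSpectrum.zeroLocus (monIdeal K u : Set (MvPolynomial (Fin n) K)) =
      PrimeSpectrum.zeroLocus (monIdeal K u' : Set (MvPolynomial (Fin n) K)) := by
    ext p
    simp only [mem_zeroLocus_monIdeal_iff, h]
  rw [ringKrullDim_quotient, ringKrullDim_quotient, hlocus]

theorem monIdeal_eq_top {u : Fin q → Fin n →₀ ℕ} {j : Fin q} (hj : u j = 0) :
    monIdeal K u = ⊤ :=
  (Ideal.eq_top_iff_one _).2 (Ideal.subset_span ⟨j, by simp only [hj, monomial_zero', C_1]⟩)

theorem support_relabel (hf : ∀ i, StrictMono (f i)) (hbot : ∀ i, f i ⊥ = 0) (a : ∀ i, α i) :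
    ((relabel f a).support : Set (Fin n)) = {i | a i ≠ ⊥} := by
  ext i
  rw [Finset.mem_coe, Finsupp.mem_support_iff, relabel_apply, ← hbot i, (hf i).injective.ne_iff]
  rfl

theorem gorQuot_relabel_iff [∀ i, Finite (α i)] (c : Fin q → ∀ i, α i) (hf : ∀ i, StrictMono (f i))
    (hbot : ∀ i, f i ⊥ = 0) (hf' : ∀ i, StrictMono (f' i)) (hbot' : ∀ i, f' i ⊥ = 0) :
    gorQuot K n (monIdeal K fun j => relabel f (c j)) ↔
      gorQuot K n (monIdeal K fun j => relabel f' (c j)) := by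
  by_cases hc : ∃ j, c j = ⊥
  · obtain ⟨j, hj⟩ := hc
    rw [monIdeal_eq_top (j := j) (hj ▸ relabel_bot hbot),
      monIdeal_eq_top (j := j) (hj ▸ relabel_bot hbot')]
  · have hU : ⊥ ∉ upperClosure (range c) := by
      simpa only [mem_upperClosure, exists_range_iff, le_bot_iff] using hc
    obtain ⟨P⟩ := GradedFrame.nonempty_of_bot_notMem (K := K) hU
    obtain ⟨F, hF⟩ := exists_minFreeRes_relabel P hf hbot
    obtain ⟨F', hF'⟩ := exists_minFreeRes_relabel P hf' hbot'
    refine F.gorQuot_congr F' (funext fun k => (hF k).trans (hF' k).symm)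
      (ringKrullDim_quotient_monIdeal_congr fun j => Finset.coe_injective ?_)
    rw [support_relabel hf hbot, support_relabel hf' hbot']

end Relabel

section Signature

open Set

variable {n q : ℕ}

theorem card_filter_lt_lt_card_filter_lt {α : Type*} [Preorder α] [DecidableLT α] {s : Finset α}
    {a b : α} (ha : a ∈ s) (hab : a < b) :
    (s.filter (· < a)).card < (s.filter (· < b)).card := by
  refine Finset.card_lt_card (Finset.ssubset_iff_of_subset ?_ |>.2 ⟨a, ?_, ?_⟩)
  · exact Finset.monotone_filter_right s fun x _ hx => hx.trans hab
  · exact Finset.mem_filter.2 ⟨ha, hab⟩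
  · exact fun h => lt_irrefl a (Finset.mem_filter.1 h).2

theorem exists_apply_eq_zero_of_two_le_heightOf {K : Type} [Field K] {v : Fin q → Fin n →₀ ℕ}
    (hht : 2 ≤ heightOf (monIdeal K v)) (i : Fin n) : ∃ j, v j i = 0 := by
  by_contra! hne
  have hX : Prime (X i : MvPolynomial (Fin n) K) := X_prime
  let p : PrimeSpectrum (MvPolynomial (Fin n) K) :=
    ⟨Ideal.span {X i}, (Ideal.span_singleton_prime hX.ne_zero).2 hX⟩
  have hle : monIdeal K v ≤ p.asIdeal := by
    refine Ideal.span_le.2 (range_subset_iff.2 fun j => Ideal.mem_span_singleton.2 ?_)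
    exact X_dvd_monomial.2 (.inr (hne j))
  have hheight : Order.height p ≤ 1 := by
    have := p.isPrime
    have hmem : p.asIdeal ∈ p.asIdeal.minimalPrimes := by
      rw [Ideal.minimalPrimes_eq_subsingleton_self, mem_singleton_iff]
    rw [← PrimeSpectrum.height_eq_orderHeight]
    exact Ideal.height_le_one_of_isPrincipal_of_mem_minimalPrimes (Ideal.span {X i}) _ hmem
  exact absurd (hht.trans ((iInf₂_le p hle).trans hheight)) (by decide)

theorem gor_quot_iff_gor_quot_sgn_general {K : Type} [Field K] (v : Fin q → Fin n →₀ ℕ)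
    (hzero : ∀ i, ∃ j, v j i = 0) :
    gorQuot K n (monIdeal K v) ↔ gorQuot K n (monIdeal K (sgnExp v)) := by
  let _ (i : Fin n) : OrderBot (range fun j => v j i) :=
    { bot := ⟨0, hzero i⟩, bot_le := fun x => Nat.zero_le x }
  let values (i : Fin n) : Finset ℕ := Finset.univ.image fun j => v j i
  have mem_values {i : Fin n} (x : range fun j => v j i) : (x : ℕ) ∈ values i := by
    obtain ⟨_, j, rfl⟩ := x
    exact Finset.mem_image_of_mem _ (Finset.mem_univ j)
  let entry (j : Fin q) (i : Fin n) : range fun j => v j i := ⟨v j i, j, rfl⟩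
  let position (i : Fin n) (x : range fun j => v j i) : ℕ := ((values i).filter (· < (x : ℕ))).card
  have hv : (fun j => relabel (fun _ => Subtype.val) (entry j)) = v := by
    ext j i
    rfl
  have hsgn : (fun j => relabel position (entry j)) = sgnExp v := rfl
  rw [← hsgn, ← congrArg (monIdeal K) hv]
  exact gorQuot_relabel_iff entry (fun i => Subtype.strictMono_coe _) (fun i => rfl)
    (fun i x y hxy => card_filter_lt_lt_card_filter_lt (mem_values x) hxy)
    fun i => Finset.card_eq_zero.2 (Finset.filter_false_of_mem fun m _ => Nat.not_lt_zero m)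

end Signature

/-- **Signature invariants of monomial ideals** (Theorem: Gorensteinness).
Let `I` be a monomial ideal of `R = K[x_1,…,x_n]` of height at least `2`, with minimal
monomial generating set `G(I) = {x^{v_1},…,x^{v_q}}`.  Then `R/I` is Gorenstein if and
only if `R/sgn(I)` is Gorenstein. -/
theorem gor_quot_iff_gor_quot_sgn (K : Type) [Field K] (n q : ℕ)
    (v : Fin q → Fin n →₀ ℕ) (hv : AntichainFam v)
    (I : Ideal (MvPolynomial (Fin n) K)) (hI : I = monIdeal K v)
    (hht : (2 : ℕ∞) ≤ heightOf I) :
    gorQuot K n I ↔ gorQuot K n (monIdeal K (sgnExp v)) := by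
  subst hI
  exact gor_quot_iff_gor_quot_sgn_general v (exists_apply_eq_zero_of_two_le_heightOf hht)
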